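/- arXiv:2202.02010 — 5 statements merged into one kernel-verified Lean document; each statement's English description precedes it below -/
import Mathlib

section
/- Let G=(V,E) be a finite simple undirected graph and let S be a globally minimal defensive alliance in G. Then the subgraph G[S] induced by S is connected. -/
/-!
The vertices of `S` reachable inside `G[S]` from a fixed `a ∈ S` form a set `T ⊆ S` that contains
every `S`-neighbour of each of its members. Hence members of `T` have the same neighbours inside and
outside `T` as inside and outside `S`, and `T` inherits being a defensive alliance from `S`
(`IsDefensiveAlliance.of_closed`). Minimality of `S` forces `T = S`, so `G[S]` has only one
component.
-/

open Finset

/-- Number of neighbours of `v` (in graph `G`) lying in `S`. -/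
def degIn {V : Type*} [Fintype V] [DecidableEq V] (G : SimpleGraph V) [DecidableRel G.Adj]
    (S : Finset V) (v : V) : ℕ :=
  (S.filter (fun u => G.Adj v u)).card

/-- `v` is protected w.r.t. `S` : `d_S(v) + 1 ≥ d_{S^c}(v)`. -/
def IsProtected {V : Type*} [Fintype V] [DecidableEq V] (G : SimpleGraph V) [DecidableRel G.Adj]
    (S : Finset V) (v : V) : Prop :=
  degIn G Sᶜ v ≤ degIn G S v + 1

/-- `S` is a defensive alliance: non-empty and every vertex of `S` is protected. -/
def IsDefensiveAlliance {V : Type*} [Fintype V] [DecidableEq V] (G : SimpleGraph V)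
    [DecidableRel G.Adj] (S : Finset V) : Prop :=
  S.Nonempty ∧ ∀ v ∈ S, IsProtected G S v

/-- `S` is a globally minimal defensive alliance: a defensive alliance no proper
subset of which is a defensive alliance. -/
def IsGloballyMinimalDA {V : Type*} [Fintype V] [DecidableEq V] (G : SimpleGraph V)
    [DecidableRel G.Adj] (S : Finset V) : Prop :=
  IsDefensiveAlliance G S ∧ ∀ T ⊂ S, ¬ IsDefensiveAlliance G T

/-- `v ∈ S` is marginally protected: moving any neighbour of `v` lying in `S`
out of `S` leaves `v` unprotected. -/
def IsMarginallyProtected {V : Type*} [Fintype V] [DecidableEq V] (G : SimpleGraph V)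
    [DecidableRel G.Adj] (S : Finset V) (v : V) : Prop :=
  ∀ u ∈ S, G.Adj v u → ¬ IsProtected G (S.erase u) v

/-- A non-empty subset of a defensive alliance that is a union of components of the induced
subgraph is again a defensive alliance. -/
theorem IsDefensiveAlliance.of_closed {V : Type*} [Fintype V] [DecidableEq V] {G : SimpleGraph V}
    [DecidableRel G.Adj] {S T : Finset V} (hS : IsDefensiveAlliance G S) (hTS : T ⊆ S)
    (hT : T.Nonempty) (hclosed : ∀ v ∈ T, ∀ u ∈ S, G.Adj v u → u ∈ T) :
    IsDefensiveAlliance G T := by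
  refine ⟨hT, fun v hv => ?_⟩
  have key : ∀ u, G.Adj v u → (u ∈ T ↔ u ∈ S) := fun u huv =>
    ⟨fun h => hTS h, fun h => hclosed v hv u h huv⟩
  have h_in : degIn G T v = degIn G S v := by
    unfold degIn
    congr 1
    ext u
    simp only [mem_filter]
    exact and_congr_left (key u)
  have h_out : degIn G Tᶜ v = degIn G Sᶜ v := by
    unfold degIn
    congr 1
    ext u
    simp only [mem_filter, mem_compl]
    exact and_congr_left fun h => not_congr (key u h)
  have h := hS.2 v (hTS hv)
  unfold IsProtected at h ⊢
  rwa [h_in, h_out]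

theorem globallyMinimal_connected
    {V : Type*} [Fintype V] [DecidableEq V] (G : SimpleGraph V) [DecidableRel G.Adj]
    (S : Finset V) (hS : IsGloballyMinimalDA G S) :
    (G.induce (↑S : Set V)).Connected := by
  classical
  obtain ⟨hDA, hmin⟩ := hS
  have : Nonempty (↑S : Set V) := hDA.1.coe_sort
  refine ⟨fun a b => ?_⟩
  let T : Finset V :=
    S.filter fun v => ∃ h : v ∈ (↑S : Set V), (G.induce (↑S : Set V)).Reachable a ⟨v, h⟩
  have hT : IsDefensiveAlliance G T := by
    refine hDA.of_closed (filter_subset _ _) ⟨a, mem_filter.2 ⟨a.2, a.2, .refl _⟩⟩ ?_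
    intro v hv u hu hvu
    obtain ⟨-, hvS, hreach⟩ := mem_filter.1 hv
    refine mem_filter.2 ⟨hu, hu, hreach.trans (SimpleGraph.Adj.reachable ?_)⟩
    exact hvu
  have hTS : T = S := by
    by_contra hne
    exact hmin T ((filter_subset _ _).ssubset_of_ne hne) hT
  have hb : (b : V) ∈ T := hTS.superset b.2
  exact (mem_filter.1 hb).2.2
end

section
/- Let G=(V,E) be a finite simple undirected graph and let S ⊆ V be a non-empty set such that the induced subgraph G[S] is connected and every vertex v ∈ S is protected and marginally protected with respect to S. Then S is a globally minimal defensive alliance in G. -/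
/-!
Protection is monotone: enlarging the set only increases the number of neighbours inside and
decreases the number outside (`IsProtected.mono`). If `T ⊂ S` were a defensive alliance, then, as
`G[S]` is connected, some edge joins a vertex `v ∈ T` to a vertex `u ∈ S \ T`. Since
`T ⊆ S \ {u}`, monotonicity makes `v` protected with respect to `S \ {u}`, which contradicts the
marginal protection of `v`.
-/

open Finset

theorem degIn_mono {V : Type*} [Fintype V] [DecidableEq V] (G : SimpleGraph V)
    [DecidableRel G.Adj] {S T : Finset V} (hST : S ⊆ T) (v : V) : degIn G S v ≤ degIn G T v :=
  card_le_card (filter_subset_filter _ hST)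

theorem IsProtected.mono {V : Type*} [Fintype V] [DecidableEq V] {G : SimpleGraph V}
    [DecidableRel G.Adj] {S T : Finset V} {v : V} (h : IsProtected G S v) (hST : S ⊆ T) :
    IsProtected G T v := by
  have h1 := degIn_mono G hST v
  have h2 := degIn_mono G (compl_subset_compl.mpr hST) v
  unfold IsProtected at h ⊢
  omega

theorem connected_marginally_protected_globallyMinimal
    {V : Type*} [Fintype V] [DecidableEq V] (G : SimpleGraph V) [DecidableRel G.Adj]
    (S : Finset V) (hne : S.Nonempty)
    (hconn : (G.induce (↑S : Set V)).Connected)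
    (h : ∀ v ∈ S, IsProtected G S v ∧ IsMarginallyProtected G S v) :
    IsGloballyMinimalDA G S := by
  refine ⟨⟨hne, fun v hv => (h v hv).1⟩, ?_⟩
  rintro T hTS ⟨⟨a, ha⟩, hT⟩
  obtain ⟨b, hbS, hbT⟩ := exists_of_ssubset hTS
  obtain ⟨w⟩ := hconn.preconnected ⟨a, hTS.1 ha⟩ ⟨b, hbS⟩
  -- A walk in `G[S]` from `a ∈ T` to `b ∉ T` leaves `T` along some edge.
  obtain ⟨d, -, hd1, hd2⟩ := w.exists_boundary_dart {x | x.1 ∈ T} ha hbT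
  refine (h d.fst.1 d.fst.2).2 d.snd.1 d.snd.2 d.adj ((hT _ hd1).mono ?_)
  exact subset_erase.mpr ⟨hTS.1, hd2⟩
end

section
/- Let G=(V,E) be a finite simple undirected graph, let v ∈ V, and let ℓ be the number of neighbours of v that have degree one in G. If 2ℓ > deg_G(v) + 1, then v does not belong to any globally minimal defensive alliance of size at least 2 in G. -/
/-! A vertex of degree one is by itself a defensive alliance, so a globally minimal defensive
alliance `S` with at least two vertices contains none. If `v ∈ S`, then all `ℓ` pendant neighbours
of `v` lie outside `S`; since `d_S(v) + d_{Sᶜ}(v) = deg v`, protection of `v` forces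
`2ℓ ≤ 2 d_{Sᶜ}(v) ≤ deg v + 1`. -/

open Finset

theorem degIn_add_degIn_compl {V : Type*} [Fintype V] [DecidableEq V] (G : SimpleGraph V)
    [DecidableRel G.Adj] (S : Finset V) (v : V) :
    degIn G S v + degIn G Sᶜ v = G.degree v := by
  unfold degIn
  rw [← card_union_of_disjoint (disjoint_filter_filter disjoint_compl_right), ← filter_union,
    union_compl, ← G.card_neighborFinset_eq_degree, G.neighborFinset_eq_filter]

theorem isDefensiveAlliance_singleton {V : Type*} [Fintype V] [DecidableEq V]
    (G : SimpleGraph V) [DecidableRel G.Adj] {u : V} (hu : G.degree u = 1) :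
    IsDefensiveAlliance G {u} := by
  refine ⟨singleton_nonempty u, fun w hw => ?_⟩
  obtain rfl := mem_singleton.mp hw
  have h := degIn_add_degIn_compl G {w} w
  unfold IsProtected
  omega

theorem many_pendant_neighbours_not_in_globally_minimal
    {V : Type*} [Fintype V] [DecidableEq V] (G : SimpleGraph V) [DecidableRel G.Adj]
    (v : V)
    (hl : G.degree v + 1 < 2 * ((G.neighborFinset v).filter (fun u => G.degree u = 1)).card) :
    ∀ S : Finset V, IsGloballyMinimalDA G S → 2 ≤ S.card → v ∉ S := by
  intro S hS hcard hv
  have hsub : (G.neighborFinset v).filter (fun u => G.degree u = 1) ⊆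
      Sᶜ.filter (fun u => G.Adj v u) := by
    intro u hu
    obtain ⟨hvu, hu1⟩ := mem_filter.mp hu
    refine mem_filter.mpr ⟨mem_compl.mpr fun huS => ?_, (G.mem_neighborFinset v u).mp hvu⟩
    refine hS.2 {u} ((singleton_subset_iff.mpr huS).ssubset_of_ne ?_)
      (isDefensiveAlliance_singleton G hu1)
    rintro rfl
    simp at hcard
  have hle := card_le_card hsub
  have hprot : degIn G Sᶜ v ≤ degIn G S v + 1 := hS.1.2 v hv
  have hdeg := degIn_add_degIn_compl G S v
  change _ ≤ degIn G Sᶜ v at hle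
  omega
end

section
/- Let G=(V,E) be a finite simple undirected graph and let C_1,…,C_k be a partition of V into type classes, i.e., any two vertices u,v lying in the same class C_i satisfy N(u)∖{v} = N(v)∖{u}. If S, T ⊆ V satisfy |S ∩ C_i| = |T ∩ C_i| for every i ∈ {1,…,k}, then S is a defensive alliance in G if and only if T is a defensive alliance in G. -/
/-!
Adjacency between two distinct vertices depends only on their type classes
(`adj_iff_of_type_eq`). So the number of neighbours of `v` in a set `A` is determined by the class
of `v`, the number of elements of `A` in each class, and whether `v ∈ A` (as `v` is not its own
neighbour): this is `degIn_eq_of_counts`. If `S` and `T` meet every class in equally many vertices,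
so do their complements, and each `w ∈ T` has some `v ∈ S` in its class; the degrees of `v` into `S`
and `Sᶜ` are then those of `w` into `T` and `Tᶜ`, so protection of `v` gives protection of `w`.

The partition is encoded by the function `f` sending a vertex to the index of its class.
-/

open Finset

/-- Adjacency of two distinct vertices depends only on their type classes. -/
theorem adj_iff_of_type_eq {V ι : Type*} (G : SimpleGraph V) (f : V → ι)
    (htype : ∀ u v x, f u = f v → x ≠ u → x ≠ v → (G.Adj u x ↔ G.Adj v x))
    {u u' v v' : V} (hu : f u = f u') (hv : f v = f v') (huv : u ≠ v) (huv' : u' ≠ v') :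
    G.Adj u v ↔ G.Adj u' v' := by
  by_cases h : v = u'
  -- If `v = u'`, all four vertices share one class, and the pair `u', v` is not available
  -- as an intermediate step between `u, v` and `u', v'`.
  · subst h
    by_cases h' : u = v'
    · subst h'
      exact G.adj_comm _ _
    · rw [G.adj_comm u v, htype v v' u hv huv h', G.adj_comm v' u]
      exact htype u v v' hu (Ne.symm h') huv'.symm
  · rw [htype u u' v hu huv.symm h, G.adj_comm u' v, G.adj_comm u' v']
    exact htype v v' u' hv (Ne.symm h) huv'

theorem degIn_eq_of_counts {V ι : Type*} [Fintype V] [DecidableEq V] [Fintype ι] [DecidableEq ι]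
    (G : SimpleGraph V) [DecidableRel G.Adj] (f : V → ι)
    (htype : ∀ u v x, f u = f v → x ≠ u → x ≠ v → (G.Adj u x ↔ G.Adj v x))
    (A B : Finset V) (hcard : ∀ i, (A.filter (f · = i)).card = (B.filter (f · = i)).card)
    {v w : V} (hvw : f v = f w) (hmem : v ∈ A ↔ w ∈ B) :
    degIn G A v = degIn G B w := by
  have key : ∀ (D : Finset V) (x : V), degIn G D x =
      ∑ i, (((D.filter (f · = i)).erase x).filter (G.Adj x)).card := by
    intro D x
    rw [degIn, Finset.card_eq_sum_card_fiberwise (f := f) (t := Finset.univ) (by simp)]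
    refine Finset.sum_congr rfl fun i _ => congrArg Finset.card ?_
    ext y
    simp only [Finset.mem_filter, Finset.mem_erase]
    constructor
    · rintro ⟨⟨h1, h2⟩, h3⟩
      exact ⟨⟨h2.ne', h1, h3⟩, h2⟩
    · rintro ⟨⟨_, h1, h3⟩, h2⟩
      exact ⟨⟨h1, h2⟩, h3⟩
  rw [key, key]
  refine Finset.sum_congr rfl fun i _ => ?_
  have hc : ((A.filter (f · = i)).erase v).card = ((B.filter (f · = i)).erase w).card := by
    have : v ∈ A.filter (f · = i) ↔ w ∈ B.filter (f · = i) := by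
      simp only [Finset.mem_filter, hmem, hvw]
    simp only [Finset.card_erase_eq_ite, this, hcard i]
  have hadj : ∀ a ∈ (A.filter (f · = i)).erase v, ∀ b ∈ (B.filter (f · = i)).erase w,
      (G.Adj v a ↔ G.Adj w b) := by
    intro a ha b hb
    simp only [Finset.mem_filter, Finset.mem_erase] at ha hb
    exact adj_iff_of_type_eq G f htype hvw (ha.2.2.trans hb.2.2.symm) (Ne.symm ha.1) (Ne.symm hb.1)
  generalize (A.filter (f · = i)).erase v = P at hc hadj
  generalize (B.filter (f · = i)).erase w = Q at hc hadj
  -- Either every vertex of `P` and of `Q` is a neighbour (of `v`, resp. `w`), or none is.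
  by_cases hex : ∃ a ∈ P, G.Adj v a
  · obtain ⟨a, ha, hva⟩ := hex
    have hQ : ∀ b ∈ Q, G.Adj w b := fun b hb => (hadj a ha b hb).1 hva
    obtain ⟨b, hb⟩ : Q.Nonempty := by
      rw [← Finset.card_pos, ← hc]
      exact Finset.card_pos.2 ⟨a, ha⟩
    have hP : ∀ c ∈ P, G.Adj v c := fun c hcP => (hadj c hcP b hb).2 (hQ b hb)
    rw [Finset.filter_true_of_mem hP, Finset.filter_true_of_mem hQ, hc]
  · have hP : ∀ a ∈ P, ¬ G.Adj v a := fun a ha h => hex ⟨a, ha, h⟩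
    have hQ : ∀ b ∈ Q, ¬ G.Adj w b := by
      intro b hb
      obtain ⟨a, ha⟩ : P.Nonempty := by
        rw [← Finset.card_pos, hc]
        exact Finset.card_pos.2 ⟨b, hb⟩
      exact fun h => hP a ha ((hadj a ha b hb).2 h)
    rw [Finset.filter_false_of_mem hP, Finset.filter_false_of_mem hQ]

theorem isDefensiveAlliance_of_counts {V ι : Type*} [Fintype V] [DecidableEq V] [Fintype ι]
    [DecidableEq ι] (G : SimpleGraph V) [DecidableRel G.Adj] (f : V → ι)
    (htype : ∀ u v x, f u = f v → x ≠ u → x ≠ v → (G.Adj u x ↔ G.Adj v x))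
    (S T : Finset V) (hcard : ∀ i, (S.filter (f · = i)).card = (T.filter (f · = i)).card)
    (hS : IsDefensiveAlliance G S) : IsDefensiveAlliance G T := by
  obtain ⟨⟨s, hs⟩, hprot⟩ := hS
  refine ⟨?_, fun w hw => ?_⟩
  · have : (T.filter (f · = f s)).Nonempty := by
      rw [← Finset.card_pos, ← hcard]
      exact Finset.card_pos.2 ⟨s, by simp [hs]⟩
    exact this.mono (Finset.filter_subset _ _)
  · obtain ⟨v, hv⟩ : (S.filter (f · = f w)).Nonempty := by
      rw [← Finset.card_pos, hcard]
      exact Finset.card_pos.2 ⟨w, by simp [hw]⟩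
    obtain ⟨hvS, hvw⟩ := Finset.mem_filter.1 hv
    have hcompl : ∀ i, (Sᶜ.filter (f · = i)).card = (Tᶜ.filter (f · = i)).card := by
      intro i
      have split : ∀ D : Finset V, (D.filter (f · = i)).card + (Dᶜ.filter (f · = i)).card
          = (Finset.univ.filter (f · = i)).card := by
        intro D
        rw [← Finset.card_union_of_disjoint
          (Finset.disjoint_filter_filter disjoint_compl_right), ← Finset.filter_union,
          Finset.union_compl]
      have h1 := split S
      have h2 := split T
      have h3 := hcard i
      omega
    have hp := hprot v hvS
    unfold IsProtected at hp ⊢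
    rwa [← degIn_eq_of_counts G f htype S T hcard hvw (by simp [hvS, hw]),
      ← degIn_eq_of_counts G f htype Sᶜ Tᶜ hcompl hvw (by simp [hvS, hw])]

theorem defensiveAlliance_iff_of_typeClass_counts
    {V : Type*} [Fintype V] [DecidableEq V] (G : SimpleGraph V) [DecidableRel G.Adj]
    (k : ℕ) (C : Fin k → Finset V)
    (hpart : ∀ v : V, ∃! i, v ∈ C i)
    (htype : ∀ i, ∀ u ∈ C i, ∀ v ∈ C i,
      (G.neighborFinset u).erase v = (G.neighborFinset v).erase u)
    (S T : Finset V) (hcard : ∀ i, (S ∩ C i).card = (T ∩ C i).card) :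
    IsDefensiveAlliance G S ↔ IsDefensiveAlliance G T := by
  choose f hf hfu using hpart
  have hC : ∀ i x, x ∈ C i ↔ f x = i := fun i x =>
    ⟨fun h => (hfu x i h).symm, fun h => h ▸ hf x⟩
  have htype' : ∀ u v x, f u = f v → x ≠ u → x ≠ v → (G.Adj u x ↔ G.Adj v x) := by
    intro u v x huv hxu hxv
    have h := congrArg (x ∈ ·) (htype (f v) u ((hC _ _).2 huv) v (hf v))
    simpa [hxu, hxv] using h
  have hint : ∀ (D : Finset V) i, D ∩ C i = D.filter (f · = i) := by
    intro D i
    ext x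
    simp [hC]
  simp only [hint] at hcard
  exact ⟨isDefensiveAlliance_of_counts G f htype' S T hcard,
    isDefensiveAlliance_of_counts G f htype' T S fun i => (hcard i).symm⟩
end

section
/- Let k ≥ 1 and let G be an s-regular finite simple graph on n vertices with n ≥ 2k + 1 and s ≤ n − 2. Construct the graph G' as follows: the vertices of G' are the vertices of G, a set Z = {z_1,…,z_{n−2k}} forming a clique, a vertex r, a set V_r of n − 2k new vertices each adjacent only to r, and for each vertex u of G a set V_u of n − s − 2 new vertices each adjacent only to u; every vertex of Z is adjacent to every vertex of G and to r; all edges of G are retained. Then G contains a clique of size k if and only if G' contains a globally minimal defensive alliance S with r ∈ S. -/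
/-!
Write `m = n - 2k` and `p = n - s - 2`. In `G'` the pendant vertices have degree `1`, a vertex of
`G` has degree `s + m + p = 2(n - k - 1)`, a vertex of `Z` has degree `n + m = 2(n - k)`, and `r` has
degree `2m`. Since `v` is protected by `S` exactly when `deg v ≤ 2 d_S(v) + 1`, these three kinds of
vertices need respectively `n - k - 1`, `n - k` and `m` neighbours in `S`, and pendant vertices are
always protected.

* If `C` is a `k`-clique, then in `S = C ∪ Z ∪ {r}` every vertex has exactly the required number of
  neighbours. So an alliance `T ⊆ S` contains all `S`-neighbours of each of its vertices
  (`mem_of_tight`), and `T = S` because every vertex of `S` is equal or adjacent to a vertex of `Z`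
  and `Z` is a clique.
* Conversely, let `S` be globally minimal with `r ∈ S`. A pendant vertex alone is an alliance, so `S`
  contains none; hence `r` forces `Z ⊆ S`, and `S = C ∪ Z ∪ {r}` with `C ⊆ V`. The vertices of `Z`
  give `|C| ≥ k`. If `|C| > k`, then `S` without `r` is still an alliance, contradicting minimality.
  So `|C| = k`, and each vertex of `C` has at least `k - 1` neighbours in `C`: it is a clique.
-/

open Finset

/-- Vertex set of the reduced graph `G'`: original vertices of `G`, the clique
`Z` (of size `m = n - 2k`), the root `r`, the pendant set `V_r` (of size `m`),
and for each `u` a pendant set `V_u` (of size `p = n - s - 2`). -/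
abbrev RVert (V : Type*) (m p : ℕ) : Type _ :=
  V ⊕ Fin m ⊕ Unit ⊕ Fin m ⊕ (V × Fin p)

/-- Base (one-sided) adjacency relation of the reduced graph. -/
def baseRel {V : Type*} [DecidableEq V] (G : SimpleGraph V) [DecidableRel G.Adj] {m p : ℕ} :
    RVert V m p → RVert V m p → Bool
  | Sum.inl u, Sum.inl v => decide (G.Adj u v)                           -- edges of G retained
  | Sum.inr (Sum.inl _), Sum.inl _ => true                               -- Z to every vertex of G
  | Sum.inr (Sum.inl _), Sum.inr (Sum.inl _) => true                     -- Z is a clique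
  | Sum.inr (Sum.inl _), Sum.inr (Sum.inr (Sum.inl _)) => true           -- Z to r
  | Sum.inr (Sum.inr (Sum.inl _)), Sum.inr (Sum.inr (Sum.inr (Sum.inl _))) => true -- r to V_r
  | Sum.inl u, Sum.inr (Sum.inr (Sum.inr (Sum.inr (u', _)))) => decide (u = u')    -- u to V_u
  | _, _ => false

/-- The reduced graph `G'`. -/
def Gprime {V : Type*} [DecidableEq V] (G : SimpleGraph V) [DecidableRel G.Adj] (m p : ℕ) :
    SimpleGraph (RVert V m p) :=
  SimpleGraph.fromRel (fun a b => baseRel G a b = true)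

instance {V : Type*} [DecidableEq V] (G : SimpleGraph V) [DecidableRel G.Adj] (m p : ℕ) :
    DecidableRel (Gprime G m p).Adj := fun a b =>
  decidable_of_iff (a ≠ b ∧ (baseRel G a b = true ∨ baseRel G b a = true)) Iff.rfl

/-- The root vertex `r` of the reduced graph. -/
def rootVert (V : Type*) (m p : ℕ) : RVert V m p := Sum.inr (Sum.inr (Sum.inl ()))

/-- The set `S = C ∪ Z ∪ {r}` inside the reduced graph. -/
def Sconstruct {V : Type*} [Fintype V] [DecidableEq V] (C : Finset V) (m p : ℕ) :
    Finset (RVert V m p) :=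
  C.image Sum.inl ∪
    Finset.univ.image (fun i : Fin m => (Sum.inr (Sum.inl i) : RVert V m p)) ∪
    {rootVert V m p}

/-! ### Protection and tight alliances in an arbitrary graph -/

section General

variable {V : Type*} [Fintype V] [DecidableEq V] (G : SimpleGraph V) [DecidableRel G.Adj]

/-- Protection in terms of the full degree `degIn G univ v` of `v`. -/
lemma isProtected_iff (S : Finset V) (v : V) :
    IsProtected G S v ↔ degIn G univ v ≤ 2 * degIn G S v + 1 := by
  have h : degIn G univ v = degIn G S v + degIn G Sᶜ v := by
    unfold degIn
    rw [← card_union_of_disjoint, ← filter_union, union_compl]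
    exact disjoint_filter_filter disjoint_compl_right
  unfold IsProtected
  omega

/-- If `S` gives `v` exactly half of its degree, then any `T ⊆ S` protecting `v` contains all
neighbours of `v` in `S`. -/
lemma mem_of_tight {S T : Finset V} (hTS : T ⊆ S) {v u : V}
    (hT : IsProtected G T v) (hS : degIn G univ v = 2 * degIn G S v)
    (hu : u ∈ S) (hvu : G.Adj v u) : u ∈ T := by
  rw [isProtected_iff] at hT
  have hle : degIn G S v ≤ degIn G T v := by omega
  have := eq_of_subset_of_card_le (filter_subset_filter (fun u => G.Adj v u) hTS) hle
  have hu' : u ∈ S.filter (fun u => G.Adj v u) := by simp [hu, hvu]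
  rw [← this] at hu'
  exact (mem_filter.1 hu').1

lemma degIn_eq_sum (S : Finset V) (v : V) :
    degIn G S v = ∑ u, if u ∈ S ∧ G.Adj v u then 1 else 0 := by
  rw [degIn, ← card_filter]
  congr 1
  ext u
  simp

/-- A set of at most `k` vertices, each with at least `k - 1` neighbours inside it, is a clique. -/
lemma isClique_of_degIn {C : Finset V} {k : ℕ} (hC : C.card ≤ k)
    (h : ∀ v ∈ C, k ≤ degIn G C v + 1) : G.IsClique (C : Set V) := by
  intro v hv w hw hvw
  have hv' : v ∈ C := hv
  have hsub : C.filter (fun u => G.Adj v u) ⊆ C.erase v := by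
    intro u hu
    rw [mem_filter] at hu
    exact mem_erase.2 ⟨hu.2.ne', hu.1⟩
  have h1 := h v hv'
  have hcard : (C.erase v).card ≤ (C.filter (fun u => G.Adj v u)).card := by
    rw [card_erase_of_mem hv']
    unfold degIn at h1
    omega
  have hw' : w ∈ C.erase v := mem_erase.2 ⟨hvw.symm, hw⟩
  rw [← eq_of_subset_of_card_le hsub hcard] at hw'
  exact (mem_filter.1 hw').2

end General

section Reduction

-- Deciding equality on the nested sum `RVert V m p` exceeds the default instance size.
set_option synthInstance.maxSize 1000

variable {V : Type*} [Fintype V] [DecidableEq V] (G : SimpleGraph V) [DecidableRel G.Adj] {m p : ℕ}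

/-! ### Neighbour counts in the reduced graph -/

lemma degIn_orig (S : Finset (RVert V m p)) (u : V) :
    degIn (Gprime G m p) S (Sum.inl u) =
      degIn G (univ.filter fun w => (Sum.inl w : RVert V m p) ∈ S) u
        + (univ.filter fun i : Fin m => (Sum.inr (Sum.inl i) : RVert V m p) ∈ S).card
        + (univ.filter fun j : Fin p =>
            (Sum.inr (Sum.inr (Sum.inr (Sum.inr (u, j)))) : RVert V m p) ∈ S).card := by
  have hA : ∀ w, G.Adj w u ↔ G.Adj u w := fun w => G.adj_comm w u
  have hne : ∀ w, (¬ u = w ∧ G.Adj u w) ↔ G.Adj u w :=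
    fun w => ⟨And.right, fun h => ⟨h.ne, h⟩⟩
  simp only [degIn_eq_sum, Fintype.sum_sum_type, Fintype.sum_prod_type, card_filter]
  simp [Gprime, baseRel, hA, hne, -sum_boole, ite_and, add_assoc]
  rw [sum_comm]
  refine sum_congr rfl fun j _ => ?_
  rw [sum_eq_single u]
  · simp
  · intro x _ hx
    simp [hx.symm]
  · simp

lemma degIn_Z (S : Finset (RVert V m p)) (i : Fin m) :
    degIn (Gprime G m p) S (Sum.inr (Sum.inl i)) =
      (univ.filter fun w => (Sum.inl w : RVert V m p) ∈ S).card
        + ((univ.filter fun j : Fin m => (Sum.inr (Sum.inl j) : RVert V m p) ∈ S).erase i).card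
        + if rootVert V m p ∈ S then 1 else 0 := by
  have h : (univ.filter fun j : Fin m => (Sum.inr (Sum.inl j) : RVert V m p) ∈ S).erase i =
      univ.filter fun j : Fin m => (Sum.inr (Sum.inl j) : RVert V m p) ∈ S ∧ ¬ i = j := by
    ext j
    simp [and_comm, eq_comm]
  rw [h]
  simp only [degIn_eq_sum, Fintype.sum_sum_type, card_filter]
  simp [Gprime, baseRel, -sum_boole, add_assoc, rootVert]
  rfl

lemma degIn_root (S : Finset (RVert V m p)) :
    degIn (Gprime G m p) S (rootVert V m p) =
      (univ.filter fun j : Fin m => (Sum.inr (Sum.inl j) : RVert V m p) ∈ S).card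
        + (univ.filter fun j : Fin m =>
            (Sum.inr (Sum.inr (Sum.inr (Sum.inl j))) : RVert V m p) ∈ S).card := by
  simp only [degIn_eq_sum, Fintype.sum_sum_type, card_filter]
  simp [Gprime, baseRel, -sum_boole, rootVert]

lemma degIn_pendantRoot (j : Fin m) :
    degIn (Gprime G m p) univ (Sum.inr (Sum.inr (Sum.inr (Sum.inl j)))) = 1 := by
  simp only [degIn_eq_sum, Fintype.sum_sum_type]
  simp [Gprime, baseRel, -sum_boole]

lemma degIn_pendantOrig (x : V × Fin p) :
    degIn (Gprime G m p) univ (Sum.inr (Sum.inr (Sum.inr (Sum.inr x)))) = 1 := by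
  simp only [degIn_eq_sum, Fintype.sum_sum_type]
  simp [Gprime, baseRel, -sum_boole]

/-- A single pendant vertex is a defensive alliance. -/
lemma singleton_isDA (x : Fin m ⊕ (V × Fin p)) :
    IsDefensiveAlliance (Gprime G m p) {Sum.inr (Sum.inr (Sum.inr x))} := by
  refine ⟨singleton_nonempty _, fun v hv => ?_⟩
  rw [mem_singleton] at hv
  subst hv
  rw [isProtected_iff]
  rcases x with j | x
  · rw [degIn_pendantRoot]
    omega
  · rw [degIn_pendantOrig]
    omega

lemma degIn_univ_orig {s : ℕ} (hreg : G.IsRegularOfDegree s) (u : V) :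
    degIn (Gprime G m p) univ (Sum.inl u) = s + m + p := by
  have h : degIn G univ u = s := by
    rw [← hreg u, ← SimpleGraph.card_neighborFinset_eq_degree, degIn]
    congr 1
    ext w
    simp
  rw [degIn_orig]
  simp [h]

lemma degIn_univ_Z (i : Fin m) :
    degIn (Gprime G m p) univ (Sum.inr (Sum.inl i)) = Fintype.card V + m := by
  have := i.pos
  rw [degIn_Z]
  simp
  omega

lemma degIn_univ_root : degIn (Gprime G m p) univ (rootVert V m p) = 2 * m := by
  rw [degIn_root]
  simp
  omega

/-! ### The set `C ∪ Z ∪ {r}` -/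

@[simp] lemma orig_mem_Sconstruct {C : Finset V} {u : V} :
    (Sum.inl u : RVert V m p) ∈ Sconstruct C m p ↔ u ∈ C := by
  simp [Sconstruct, rootVert]

@[simp] lemma Z_mem_Sconstruct {C : Finset V} {i : Fin m} :
    (Sum.inr (Sum.inl i) : RVert V m p) ∈ Sconstruct C m p := by
  simp [Sconstruct]

@[simp] lemma root_mem_Sconstruct {C : Finset V} :
    rootVert V m p ∈ Sconstruct C m p := by
  simp [Sconstruct]

@[simp] lemma pendant_notMem_Sconstruct {C : Finset V} {x : Fin m ⊕ (V × Fin p)} :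
    (Sum.inr (Sum.inr (Sum.inr x)) : RVert V m p) ∉ Sconstruct C m p := by
  simp [Sconstruct, rootVert]

lemma degIn_Sconstruct_orig (C : Finset V) (u : V) :
    degIn (Gprime G m p) (Sconstruct C m p) (Sum.inl u) = degIn G C u + m := by
  rw [degIn_orig]
  simp

lemma degIn_Sconstruct_Z (C : Finset V) (i : Fin m) :
    degIn (Gprime G m p) (Sconstruct C m p) (Sum.inr (Sum.inl i)) = C.card + m := by
  have := i.pos
  rw [degIn_Z]
  simp
  omega

lemma degIn_Sconstruct_root (C : Finset V) :
    degIn (Gprime G m p) (Sconstruct C m p) (rootVert V m p) = m := by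
  rw [degIn_root]
  simp

lemma degIn_erase_orig (C : Finset V) (u : V) :
    degIn (Gprime G m p) ((Sconstruct C m p).erase (rootVert V m p)) (Sum.inl u)
      = degIn G C u + m := by
  rw [degIn_orig]
  simp [rootVert]

lemma degIn_erase_Z (C : Finset V) (i : Fin m) :
    degIn (Gprime G m p) ((Sconstruct C m p).erase (rootVert V m p)) (Sum.inr (Sum.inl i)) + 1
      = C.card + m := by
  have := i.pos
  rw [degIn_Z]
  simp [rootVert]
  omega

/-- A subset of `Sconstruct C m p` that is closed under adjacency inside it and non-empty is
everything, provided `Z` is non-empty. -/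
lemma Sconstruct_connected {C : Finset V} {T : Finset (RVert V m p)} (hm : 0 < m)
    (hTS : T ⊆ Sconstruct C m p) (hne : T.Nonempty)
    (hcl : ∀ v ∈ T, ∀ u ∈ Sconstruct C m p, (Gprime G m p).Adj v u → u ∈ T) :
    T = Sconstruct C m p := by
  have hz : ∃ i : Fin m, (Sum.inr (Sum.inl i) : RVert V m p) ∈ T := by
    obtain ⟨v, hv⟩ := hne
    rcases v with u | i | ⟨⟩ | x
    · exact ⟨⟨0, hm⟩, hcl _ hv _ Z_mem_Sconstruct (by simp [Gprime, baseRel])⟩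
    · exact ⟨i, hv⟩
    · exact ⟨⟨0, hm⟩, hcl _ hv _ Z_mem_Sconstruct (by simp [Gprime, baseRel])⟩
    · exact absurd (hTS hv) pendant_notMem_Sconstruct
  obtain ⟨i, hi⟩ := hz
  refine Subset.antisymm hTS fun v hv => ?_
  by_cases hvi : v = Sum.inr (Sum.inl i)
  · rwa [hvi]
  refine hcl _ hi _ hv ?_
  rcases v with u | j | ⟨⟩ | x
  · simp [Gprime, baseRel]
  · have hij : ¬ i = j := fun h => hvi (by rw [h])
    simp [Gprime, baseRel, hij]
  · simp [Gprime, baseRel]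
  · exact absurd hv pendant_notMem_Sconstruct

/-! ### The two implications -/

/-- A `k`-clique `C` yields the globally minimal alliance `Sconstruct C m p`. -/
lemma exists_globallyMinimal_of_clique
    {n s k : ℕ} (hn : n = Fintype.card V) (hreg : G.IsRegularOfDegree s)
    (hk : 1 ≤ k) (hnk : 2 * k + 1 ≤ n) (hmd : n - 2 * k = m) (hm : 0 < m)
    (hdeg : s + m + p = 2 * (n - k - 1)) :
    (∃ C : Finset V, G.IsNClique k C) →
      ∃ S : Finset (RVert V m p), IsGloballyMinimalDA (Gprime G m p) S ∧ rootVert V m p ∈ S := by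
  rintro ⟨C, hC, hcard⟩
  have hCdeg : ∀ u ∈ C, degIn G C u + 1 = k := by
    intro u hu
    have : C.filter (fun w => G.Adj u w) = C.erase u := by
      ext w
      rw [mem_filter, mem_erase]
      exact ⟨fun h => ⟨h.2.ne', h.1⟩, fun h => ⟨h.2, hC hu h.2 h.1.symm⟩⟩
    rw [degIn, this, card_erase_add_one hu, hcard]
  have htight : ∀ v ∈ Sconstruct C m p,
      degIn (Gprime G m p) univ v = 2 * degIn (Gprime G m p) (Sconstruct C m p) v := by
    intro v hv
    rcases v with u | i | ⟨⟩ | x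
    · have := hCdeg u (orig_mem_Sconstruct.1 hv)
      rw [degIn_univ_orig G hreg, degIn_Sconstruct_orig]
      omega
    · rw [degIn_univ_Z, degIn_Sconstruct_Z]
      omega
    · exact (degIn_univ_root G).trans (by rw [← rootVert, degIn_Sconstruct_root])
    · exact absurd hv pendant_notMem_Sconstruct
  refine ⟨Sconstruct C m p, ⟨⟨⟨_, root_mem_Sconstruct⟩, fun v hv => ?_⟩, ?_⟩,
    root_mem_Sconstruct⟩
  · rw [isProtected_iff, htight v hv]
    omega
  · rintro T hT ⟨hne, hprot⟩
    exact hT.ne (Sconstruct_connected G hm hT.1 hne fun v hv u hu hvu =>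
      mem_of_tight _ hT.1 (hprot v hv) (htight v (hT.1 hv)) hu hvu)

/-- The vertices of `V` in a globally minimal alliance containing the root form a `k`-clique. -/
lemma exists_clique_of_globallyMinimal
    {n s k : ℕ} (hn : n = Fintype.card V) (hreg : G.IsRegularOfDegree s)
    (hk : 1 ≤ k) (hnk : 2 * k + 1 ≤ n) (hmd : n - 2 * k = m) (hm : 0 < m)
    (hdeg : s + m + p = 2 * (n - k - 1)) :
    (∃ S : Finset (RVert V m p), IsGloballyMinimalDA (Gprime G m p) S ∧ rootVert V m p ∈ S) →
      ∃ C : Finset V, G.IsNClique k C := by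
  rintro ⟨S, ⟨⟨-, hprot⟩, hmin⟩, hr⟩
  have hpend : ∀ x : Fin m ⊕ (V × Fin p), (Sum.inr (Sum.inr (Sum.inr x)) : RVert V m p) ∉ S := by
    intro x hx
    refine hmin _ ((ssubset_iff_of_subset (singleton_subset_iff.2 hx)).2 ⟨_, hr, ?_⟩)
      (singleton_isDA G x)
    simp [rootVert]
  have hZ : ∀ i : Fin m, (Sum.inr (Sum.inl i) : RVert V m p) ∈ S := by
    have h := hprot _ hr
    rw [isProtected_iff, degIn_univ_root, degIn_root] at h
    simp only [hpend, filter_false, card_empty] at h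
    have hfull : (univ.filter fun j : Fin m =>
        (Sum.inr (Sum.inl j) : RVert V m p) ∈ S) = univ := by
      rw [← card_eq_iff_eq_univ, Fintype.card_fin]
      have := card_le_univ (univ.filter fun j : Fin m =>
        (Sum.inr (Sum.inl j) : RVert V m p) ∈ S)
      rw [Fintype.card_fin] at this
      omega
    intro i
    have hi := mem_univ i
    rw [← hfull] at hi
    exact (mem_filter.1 hi).2
  obtain ⟨C, rfl⟩ : ∃ C : Finset V, S = Sconstruct C m p := by
    refine ⟨univ.filter fun w => (Sum.inl w : RVert V m p) ∈ S, ?_⟩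
    ext v
    rcases v with u | i | ⟨⟩ | x
    · simp
    · simp [hZ]
    · exact iff_of_true hr root_mem_Sconstruct
    · simp [hpend]
  have hCge : k ≤ C.card := by
    have h := hprot (Sum.inr (Sum.inl ⟨0, hm⟩)) Z_mem_Sconstruct
    rw [isProtected_iff, degIn_univ_Z, degIn_Sconstruct_Z] at h
    omega
  have hCdeg : ∀ u ∈ C, k ≤ degIn G C u + 1 := by
    intro u hu
    have h := hprot (Sum.inl u) (orig_mem_Sconstruct.2 hu)
    rw [isProtected_iff, degIn_univ_orig G hreg, degIn_Sconstruct_orig] at h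
    omega
  have hCle : C.card ≤ k := by
    by_contra! hlt
    -- With more than `k` vertices in `C`, the vertices of `Z` can spare `r`.
    refine hmin _ (erase_ssubset hr)
      ⟨⟨Sum.inr (Sum.inl ⟨0, hm⟩), mem_erase.2 ⟨by simp [rootVert], Z_mem_Sconstruct⟩⟩, ?_⟩
    intro v hv
    rw [isProtected_iff]
    obtain ⟨hvr, hv⟩ := mem_erase.1 hv
    rcases v with u | i | ⟨⟩ | x
    · have := hCdeg u (orig_mem_Sconstruct.1 hv)
      rw [degIn_univ_orig G hreg, degIn_erase_orig]
      omega
    · have := degIn_erase_Z (p := p) G C i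
      rw [degIn_univ_Z]
      omega
    · exact absurd rfl hvr
    · exact absurd hv pendant_notMem_Sconstruct
  exact ⟨C, isClique_of_degIn G hCle hCdeg, le_antisymm hCle hCge⟩

end Reduction

theorem clique_iff_rooted_globallyMinimal_in_reduction
    {V : Type*} [Fintype V] [DecidableEq V] (G : SimpleGraph V) [DecidableRel G.Adj]
    (n s k : ℕ) (hn : n = Fintype.card V) (hreg : G.IsRegularOfDegree s)
    (hk : 1 ≤ k) (hnk : 2 * k + 1 ≤ n) (hs : s ≤ n - 2) :
    (∃ C : Finset V, G.IsNClique k C) ↔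
      ∃ S : Finset (RVert V (n - 2 * k) (n - s - 2)),
        IsGloballyMinimalDA (Gprime G (n - 2 * k) (n - s - 2)) S ∧
          rootVert V (n - 2 * k) (n - s - 2) ∈ S := by
  have hm : 0 < n - 2 * k := by omega
  have hdeg : s + (n - 2 * k) + (n - s - 2) = 2 * (n - k - 1) := by omega
  exact ⟨exists_globallyMinimal_of_clique G hn hreg hk hnk rfl hm hdeg,
    exists_clique_of_globallyMinimal G hn hreg hk hnk rfl hm hdeg⟩
end
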